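/- arXiv:1208.5858 — 3 statements merged into one kernel-verified Lean document; each statement's English description precedes it below -/
import Mathlib

section
/- In the polynomial ring ℂ[x_0, x_1, x_3, x_4, y_0, y_1, A, B, L, M], let J be the ideal generated by the eight polynomials x_0·y_1 − A·x_1 − y_0²·M, x_1·y_0 − A²·B − L·x_0, x_0·x_3 − x_1² − y_0·A·B·M, x_3·y_0 − y_1·A·B − x_1·L, x_1·y_1 − x_3·A − L·M·y_0, x_1·x_4 − x_3² − y_1·B·L·M, x_3·y_1 − x_4·A − L²·M, and x_4·y_0 − y_1²·B − x_3·L. Then the 'long equation' holds after multiplication by y_0: the element y_0·(x_0·x_4 − x_1·x_3 − y_0·y_1·B·M − A·B·L·M) lies in J. -/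
/-!
The long equation of the reduced model of the diptych variety of type
`[1,3,1,3]` holds after multiplication by `y₀`.
-/

open MvPolynomial

noncomputable section

namespace Dip1313

/-- The polynomial ring `ℂ[x₀, x₁, x₃, x₄, y₀, y₁, A, B, L, M]`;
variables `0,…,9 = x₀, x₁, x₃, x₄, y₀, y₁, A, B, L, M`. -/
abbrev R : Type := MvPolynomial (Fin 10) ℂ

def x0 : R := X 0
def x1 : R := X 1
def x3 : R := X 2
def x4 : R := X 3
def y0 : R := X 4
def y1 : R := X 5
def A : R := X 6
def B : R := X 7
def L : R := X 8
def M : R := X 9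

/-- The ideal generated by the eight defining equations of the reduced model
of the diptych of type `[1,3,1,3]`. -/
def J : Ideal R := Ideal.span
  { x0 * y1 - A * x1 - y0 ^ 2 * M,
    x1 * y0 - A ^ 2 * B - L * x0,
    x0 * x3 - x1 ^ 2 - y0 * A * B * M,
    x3 * y0 - y1 * A * B - x1 * L,
    x1 * y1 - x3 * A - L * M * y0,
    x1 * x4 - x3 ^ 2 - y1 * B * L * M,
    x3 * y1 - x4 * A - L ^ 2 * M,
    x4 * y0 - y1 ^ 2 * B - x3 * L }

end Dip1313

open Dip1313 in
/-- `y₀ · (x₀x₄ - x₁x₃ - y₀y₁BM - ABLM)` lies in the ideal `J` generated by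
the eight equations of the reduced model of the `[1,3,1,3]` diptych. -/
theorem long_equation_mem :
    y0 * (x0 * x4 - x1 * x3 - y0 * y1 * B * M - A * B * L * M) ∈ J := by
  -- Reduce `y₀x₄`, then `x₀y₁` and `x₀x₃`, by the generators that have them as leading terms;
  -- what is left is `-x₁` times the generator with leading term `x₃y₀`.
  have certificate : y0 * (x0 * x4 - x1 * x3 - y0 * y1 * B * M - A * B * L * M)
      = x0 * (x4 * y0 - y1 ^ 2 * B - x3 * L)
        + y1 * B * (x0 * y1 - A * x1 - y0 ^ 2 * M)
        + L * (x0 * x3 - x1 ^ 2 - y0 * A * B * M)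
        - x1 * (x3 * y0 - y1 * A * B - x1 * L) := by
    ring
  rw [certificate]
  refine J.sub_mem (J.add_mem (J.add_mem ?_ ?_) ?_) ?_ <;>
    exact J.mul_mem_left _ (Ideal.subset_span (by simp))
end
end

section
/- In the polynomial ring ℂ[x_0, x_4, y_0, y_1, y_2, A, B, L, M], let P be the ideal generated by the five Pfaffian equations p_1 = x_0·y_1 − A·B − M·y_0, p_2 = x_4·y_0 − B·y_1² − L·x_0, p_3 = x_0·y_2 − x_4·A − M·y_1², p_4 = y_0·y_2 − y_1³ − A·L, p_5 = x_4·y_1 − y_2·B − L·M. Define X_2 = x_0·x_4 − y_1·B·M, X_1 = x_0·X_2 − A·B²·M, X_3 = X_2·x_4 − B·L·M². Then all six of the following elements lie in P: X_2·y_0 − y_1·A·B² − L·x_0², X_2·y_1 − x_4·A·B − L·M·x_0, X_1·x_4 − X_2² − x_0·B·L·M², X_1·y_1 − X_2·A·B − L·M·x_0², x_0·X_3 − X_2² − x_4·A·B²·M, and X_3·y_1 − x_4²·A·B − L·M·X_2. -/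
/-!
Only the first two Pfaffians `p₁ = x₀y₁ - AB - My₀` and `p₂ = x₄y₀ - By₁² - Lx₀` are needed.
The `y₀`-equation of `x₂` is `x₀p₂ + By₁p₁`, and its `y₁`-equation is `e = x₄p₁ + Mp₂`.
Since `x₀x₄ - x₂ = y₁BM`, the remaining four equations are the multiples
`BM·e`, `x₀·e`, `BM·e`, `x₄·e` of `e`.
-/

/-!
The diptych variety of type `[3,1,3,1]`: the pentagram equations for the
redundant generators `x₂, x₁, x₃` hold modulo the five Pfaffians of `M₁`.
-/

open MvPolynomial

noncomputable section

namespace Dip3131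

/-- The polynomial ring `ℂ[x₀, x₄, y₀, y₁, y₂, A, B, L, M]`;
variables `0,…,8 = x₀, x₄, y₀, y₁, y₂, A, B, L, M`. -/
abbrev R : Type := MvPolynomial (Fin 9) ℂ

def x0 : R := X 0
def x4 : R := X 1
def y0 : R := X 2
def y1 : R := X 3
def y2 : R := X 4
def A : R := X 5
def B : R := X 6
def L : R := X 7
def M : R := X 8

/-- The ideal generated by the five Pfaffian equations of the pentagram
matrix `M₁`. -/
def P : Ideal R := Ideal.span
  { x0 * y1 - A * B - M * y0,
    x4 * y0 - B * y1 ^ 2 - L * x0,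
    x0 * y2 - x4 * A - M * y1 ^ 2,
    y0 * y2 - y1 ^ 3 - A * L,
    x4 * y1 - y2 * B - L * M }

/-- The redundant generator `x₂ = x₀x₄ - y₁BM`. -/
def X2 : R := x0 * x4 - y1 * B * M

/-- The redundant generator `x₁ = x₀x₂ - AB²M`. -/
def X1 : R := x0 * X2 - A * B ^ 2 * M

/-- The redundant generator `x₃ = x₂x₄ - BLM²`. -/
def X3 : R := X2 * x4 - B * L * M ^ 2

end Dip3131

open Dip3131 in
/-- The six pentagram equations for the redundant generators `x₁, x₂, x₃` of
the `[3,1,3,1]` diptych lie in the ideal of the five Pfaffians of `M₁`. -/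
theorem pentagram_equations_mem :
    X2 * y0 - y1 * A * B ^ 2 - L * x0 ^ 2 ∈ P ∧
    X2 * y1 - x4 * A * B - L * M * x0 ∈ P ∧
    X1 * x4 - X2 ^ 2 - x0 * B * L * M ^ 2 ∈ P ∧
    X1 * y1 - X2 * A * B - L * M * x0 ^ 2 ∈ P ∧
    x0 * X3 - X2 ^ 2 - x4 * A * B ^ 2 * M ∈ P ∧
    X3 * y1 - x4 ^ 2 * A * B - L * M * X2 ∈ P := by
  have h1 : x0 * y1 - A * B - M * y0 ∈ P := Ideal.subset_span (by simp)
  have h2 : x4 * y0 - B * y1 ^ 2 - L * x0 ∈ P := Ideal.subset_span (by simp)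
  have e : X2 * y1 - x4 * A * B - L * M * x0 ∈ P := by
    convert P.add_mem (P.mul_mem_left x4 h1) (P.mul_mem_left M h2) using 1
    simp only [X2]; ring
  refine ⟨?_, e, ?_, ?_, ?_, ?_⟩
  · convert P.add_mem (P.mul_mem_left x0 h2) (P.mul_mem_left (B * y1) h1) using 1
    simp only [X2]; ring
  · convert P.mul_mem_left (B * M) e using 1
    simp only [X1, X2]; ring
  · convert P.mul_mem_left x0 e using 1
    simp only [X1, X2]; ring
  · convert P.mul_mem_left (B * M) e using 1
    simp only [X3, X2]; ring
  · convert P.mul_mem_left x4 e using 1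
    simp only [X3, X2]; ring
end
end

section
/- In the polynomial ring ℂ[u_1,u_2,u_3,u_4, s_1,s_2,s_3,s_4, a_1,a_2,a_3,a_4] in 12 variables, let I be the ideal generated by the two polynomials u_1·u_3 − a_2·s_1·s_2·u_2 − a_4·s_3·s_4·u_4 and u_2·u_4 − a_1·s_1·s_4·u_1 − a_3·s_2·s_3·u_3. Then the quotient ring W_0 = ℂ[u,s,a]/I is a normal integral domain (an integrally closed domain) of Krull dimension 10. -/
/-!
Write `p`, `q` for the two generators, `A = ℂ[u,s,a]/I` and `w = u₁s₁s₂s₃s₄`.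

*Domain.* Once `u₁`, `s₁`, `s₄` are inverted, `p = 0` can be solved for `u₃` and then `q = 0` for
`a₁`, so `A[1/w]` is a localization of the polynomial ring `P` in the other ten variables
(`elim_I`). The resulting rational parametrisation `param` kills exactly the polynomials `g` with
`wᵏ g ∈ I` for some `k`. A variable `x` is a nonzerodivisor on `A` as soon as the restrictions of
`p` and `q` to `x = 0` are coprime (`mem_of_X_mul_mem`); this applies to `u₁` and to the `sᵢ`, so
`I` is the kernel of `param`, hence prime (`isPrime_I`).

*Normality.* If `f ∈ Frac A` is integral over `A`, then `wᵏ f ∈ A` for some `k`, because `P` is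
integrally closed (`exists_pow_mul_eq_of_isIntegral`). If `h` is integral and `g = x h ∈ A`, the
integral equation of `h` gives `x ∣ gⁿ`; so a denominator `x` can be removed whenever `A/xA` is
reduced (`strip`). First `u₁` is removed: `A/u₁A` is reduced away from `s₁s₂s₃s₄ = 0`
(`radical_e`). Then the `sᵢ` are removed one by one: `A/s₁A` is reduced, being the union of the
linear space `u₃ = u₄ = 0` and a rational variety (`radical_f`), and the cyclic symmetry of `W₀`
moves `s₁` to the other `sᵢ` (`Good.rot`).

*Dimension.* The sequence `p, q` is regular, so the dimension is at most `12 - 2`. Since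
`A/s₁A` surjects onto the polynomial ring of `s₁ = u₃ = u₄ = 0` in nine variables and `s₁` is a
nonzerodivisor, it is at least `9 + 1`.
-/

/-!
The codimension-2 complete intersection `W₀ ⊆ 𝔸¹²` from which the key 10-fold
`W ⊆ 𝔸¹⁶` is obtained by parallel unprojection is a normal integral domain of
Krull dimension 10.
-/

open MvPolynomial

noncomputable section

namespace KeyW

/-- The polynomial ring `ℂ[u₁,…,u₄, s₁,…,s₄, a₁,…,a₄]`;
variables `0,…,3 = u₁,…,u₄`, `4,…,7 = s₁,…,s₄`, `8,…,11 = a₁,…,a₄`. -/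
abbrev R : Type := MvPolynomial (Fin 12) ℂ

def u1 : R := X 0
def u2 : R := X 1
def u3 : R := X 2
def u4 : R := X 3
def s1 : R := X 4
def s2 : R := X 5
def s3 : R := X 6
def s4 : R := X 7
def a1 : R := X 8
def a2 : R := X 9
def a3 : R := X 10
def a4 : R := X 11

/-- The ideal of the complete intersection `W₀`. -/
def I : Ideal R := Ideal.span
  { u1 * u3 - a2 * s1 * s2 * u2 - a4 * s3 * s4 * u4,
    u2 * u4 - a1 * s1 * s4 * u1 - a3 * s2 * s3 * u3 }

end KeyW

namespace KeyW

/-! ### Integral elements and denominators -/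

/-- If the integrally closed domain `P ⊆ A` and `A` agree after inverting `w ∈ P`, then an element
of `Frac A` integral over `A` lies in `A` after multiplication by a power of `w`. -/
lemma exists_pow_mul_eq_of_isIntegral {P A K : Type*} [CommRing P] [IsDomain P]
    [IsIntegrallyClosed P] [CommRing A] [IsDomain A] [Field K] [Algebra P A] [Algebra A K]
    [Algebra P K] [IsScalarTower P A K] [IsFractionRing A K] [FaithfulSMul P A] (w : P)
    (hw : w ≠ 0)
    (hA : ∀ a : A, ∃ k : ℕ, ∃ r : P, algebraMap P A w ^ k * a = algebraMap P A r)
    {f : K} (hf : IsIntegral A f) :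
    ∃ k : ℕ, ∃ a : A, algebraMap P K w ^ k * f = algebraMap A K a := by
  have hAK : Function.Injective (algebraMap A K) := IsFractionRing.injective A K
  have hPA : Function.Injective (algebraMap P A) := FaithfulSMul.algebraMap_injective P A
  have hPK : Function.Injective (algebraMap P K) := by
    rw [IsScalarTower.algebraMap_eq P A K]
    exact hAK.comp hPA
  have : FaithfulSMul P K := (faithfulSMul_iff_algebraMap_injective P K).2 hPK
  have hw' : algebraMap P A w ≠ 0 := by simpa using hPA.ne hw
  have : IsFractionRing P K := by
    refine IsFractionRing.of_field P K fun z => ?_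
    obtain ⟨a, b, hb, rfl⟩ := IsFractionRing.div_surjective (A := A) z
    obtain ⟨k, r, hr⟩ := hA a
    obtain ⟨l, t, ht⟩ := hA b
    have hwK : algebraMap A K (algebraMap P A w) ≠ 0 := by simpa using hAK.ne hw'
    have hbK : algebraMap A K b ≠ 0 := by
      simpa using hAK.ne (nonZeroDivisors.ne_zero hb)
    refine ⟨w ^ l * r, w ^ k * t, ?_⟩
    rw [IsScalarTower.algebraMap_apply P A K, IsScalarTower.algebraMap_apply P A K (w ^ k * t),
      map_mul (algebraMap P A), map_mul (algebraMap P A), ← hr, ← ht]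
    simp only [map_mul, map_pow]
    field_simp
  obtain ⟨p, hp, hpf⟩ := hf
  -- A single power of `w` clears all coefficients of the integral equation.
  have hN : ∃ N : ℕ, ∀ i, ∃ r : P, algebraMap P A w ^ N * p.coeff i = algebraMap P A r := by
    choose k r hr using fun i => hA (p.coeff i)
    refine ⟨∑ i ∈ p.support, k i, fun i => ?_⟩
    by_cases hi : i ∈ p.support
    · refine ⟨w ^ (∑ j ∈ p.support.erase i, k j) * r i, ?_⟩
      rw [← Finset.add_sum_erase _ _ hi, map_mul, ← hr, pow_add, map_pow]
      ring
    · exact ⟨0, by simp [Polynomial.notMem_support_iff.1 hi]⟩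
  obtain ⟨N, hN⟩ := hN
  have hlift : p.scaleRoots (algebraMap P A w ^ N) ∈ Polynomial.lifts (algebraMap P A) := by
    rw [Polynomial.lifts_iff_coeff_lifts]
    intro i
    rw [Polynomial.coeff_scaleRoots]
    rcases lt_trichotomy i p.natDegree with hi | rfl | hi
    · obtain ⟨r, hr⟩ := hN i
      obtain ⟨d, hd⟩ : ∃ d, p.natDegree - i = d + 1 := ⟨p.natDegree - i - 1, by omega⟩
      refine ⟨r * (w ^ N) ^ d, ?_⟩
      rw [map_mul, ← hr, hd, map_pow, map_pow]
      ring
    · exact ⟨1, by simp [hp]⟩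
    · exact ⟨0, by simp [Polynomial.coeff_eq_zero_of_natDegree_lt hi]⟩
  obtain ⟨q, hq, -, hqm⟩ := Polynomial.lifts_and_degree_eq_and_monic hlift
    ((Polynomial.monic_scaleRoots_iff _).2 hp)
  have hfint : IsIntegral P (algebraMap P K w ^ N * f) := by
    refine ⟨q, hqm, ?_⟩
    have h0 := Polynomial.scaleRoots_aeval_eq_zero (r := algebraMap P A w ^ N)
      (show Polynomial.aeval f p = 0 from hpf)
    rw [← hq, Polynomial.aeval_map_algebraMap, map_pow, ← IsScalarTower.algebraMap_apply] at h0
    exact h0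
  obtain ⟨y, hy⟩ := IsIntegrallyClosed.isIntegral_iff.1 hfint
  exact ⟨N, algebraMap P A y, by rw [← hy, IsScalarTower.algebraMap_apply P A K]⟩

/-- Removal of a denominator `x`: if `x ∣ gⁿ` implies that `x` divides `g` times a power of `s`,
then an integral element with denominator a power of `x` has denominator a power of `s`. -/
lemma strip {A K : Type*} [CommRing A] [IsDomain A] [Field K] [Algebra A K] [IsFractionRing A K]
    {x s : A} (hx : x ≠ 0)
    (hrad : ∀ (g : A) (n : ℕ), x ∣ g ^ n → ∃ m : ℕ, x ∣ s ^ m * g) (k : ℕ) {f : K}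
    (hf : IsIntegral A f) (hk : ∃ a : A, algebraMap A K x ^ k * f = algebraMap A K a) :
    ∃ m : ℕ, ∃ a : A, algebraMap A K s ^ m * f = algebraMap A K a := by
  induction k generalizing f with
  | zero => exact ⟨0, by simpa using hk⟩
  | succ k ih =>
    have hAK : Function.Injective (algebraMap A K) := IsFractionRing.injective A K
    have hxK : algebraMap A K x ≠ 0 := by simpa using hAK.ne hx
    obtain ⟨g, hg⟩ := hk
    -- With `h = xᵏ f` integral and `g = x h ∈ A`, the integral equation of `h` gives `x ∣ gⁿ`.
    have hfint : IsIntegral A (algebraMap A K x ^ k * f) :=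
      (isIntegral_algebraMap.pow k).mul hf
    obtain ⟨P, hP, hPh⟩ := hfint
    have h0 := Polynomial.scaleRoots_aeval_eq_zero (r := x)
      (show Polynomial.aeval (algebraMap A K x ^ k * f) P = 0 from hPh)
    rw [← mul_assoc, ← pow_succ', hg, Polynomial.aeval_algebraMap_apply_eq_algebraMap_eval,
      map_eq_zero_iff _ hAK] at h0
    have hdvd : x ∣ g ^ P.natDegree := by
      rw [Polynomial.eval_eq_sum_range, Polynomial.natDegree_scaleRoots,
        Finset.sum_range_succ] at h0
      have hlead : (P.scaleRoots x).coeff P.natDegree = 1 := by simp [hP]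
      rw [hlead, one_mul] at h0
      rw [eq_neg_of_add_eq_zero_right h0, dvd_neg]
      refine Finset.dvd_sum fun i hi => ?_
      rw [Polynomial.coeff_scaleRoots]
      have : P.natDegree - i ≠ 0 := by
        have := Finset.mem_range.1 hi
        omega
      exact ((dvd_pow_self x this).mul_left _).mul_right _
    obtain ⟨m, b, hb⟩ := hrad g _ hdvd
    obtain ⟨m', a, ha⟩ := ih (f := algebraMap A K s ^ m * f)
      ((isIntegral_algebraMap.pow m).mul hf) ⟨b, by
        apply mul_left_cancel₀ hxK
        rw [← map_mul, ← hb, map_mul, ← hg, map_pow]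
        ring⟩
    exact ⟨m' + m, a, by rw [← ha, pow_add, mul_assoc]⟩

/-! ### Coprimality and elimination in the polynomial ring -/

/-- The substitution setting the variables in `T` to zero. -/
def kill (T : Finset (Fin 12)) : R →ₐ[ℂ] R := aeval fun i => if i ∈ T then 0 else X i

@[simp]
lemma kill_X (T : Finset (Fin 12)) (i : Fin 12) :
    kill T (X i) = if i ∈ T then 0 else X i := by
  simp [kill]

lemma X_dvd_sub_kill (v : Fin 12) (f : R) : X v ∣ f - kill {v} f := by
  rw [← Ideal.mem_span_singleton, ← Ideal.Quotient.mk_eq_mk_iff_sub_mem]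
  have h : (Ideal.Quotient.mkₐ ℂ (Ideal.span {(X v : R)})).comp (kill {v}) =
      Ideal.Quotient.mkₐ ℂ (Ideal.span {(X v : R)}) := by
    ext i
    by_cases hi : i = v
    · subst hi
      simp
    · simp [hi]
  exact (DFunLike.congr_fun h f).symm

lemma mem_supported_of_kill {T : Finset (Fin 12)} {f : R} (h : kill T f = f) :
    f ∈ supported ℂ ((T : Set (Fin 12))ᶜ) := by
  have key : ∀ g : R, kill T g ∈ supported ℂ ((T : Set (Fin 12))ᶜ) := by
    intro g
    induction g using MvPolynomial.induction_on with
    | C a =>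
      rw [kill, aeval_C]
      exact Subalgebra.algebraMap_mem _ a
    | add p q hp hq =>
      rw [map_add]
      exact add_mem hp hq
    | mul_X p i hp =>
      rw [map_mul, kill_X]
      refine mul_mem hp ?_
      split_ifs with hi
      · exact zero_mem _
      · exact X_mem_supported.2 (by simpa using hi)
  rw [← h]
  exact key f

lemma notMem_vars_of_kill {v : Fin 12} {f : R} (h : kill {v} f = f) : v ∉ f.vars := by
  intro hv
  simpa using mem_supported.1 (mem_supported_of_kill h) hv

lemma not_dvd_of_eval {f g : R} (pt : Fin 12 → ℂ) (hf : eval pt f = 0) (hg : eval pt g ≠ 0) :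
    ¬ f ∣ g := by
  rintro ⟨c, rfl⟩
  simp [hf] at hg

lemma irreducible_X (v : Fin 12) : Irreducible (X v : R) :=
  (X_prime (R := ℂ) (i := v)).irreducible

lemma isRelPrime_X {v : Fin 12} {g : R} (pt : Fin 12 → ℂ) (hf : pt v = 0) (hg : eval pt g ≠ 0) :
    IsRelPrime (X v) g :=
  (irreducible_X v).isRelPrime_iff_not_dvd.2 (not_dvd_of_eval pt (by simpa using hf) hg)

/-- If `f₁, f₂` stay coprime (and the first nonzero) after setting `X v = 0`, then every syzygy of
the two restrictions is a Koszul syzygy, and hence `X v` is a nonzerodivisor modulo `(f₁, f₂)`. -/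
lemma mem_of_X_mul_mem (v : Fin 12) {f₁ f₂ g : R} (h0 : kill {v} f₁ ≠ 0)
    (hrel : IsRelPrime (kill {v} f₁) (kill {v} f₂))
    (hg : X v * g ∈ Ideal.span {f₁, f₂}) : g ∈ Ideal.span {f₁, f₂} := by
  obtain ⟨a, b, hab⟩ := Ideal.mem_span_pair.1 hg
  have hk : kill {v} a * kill {v} f₁ + kill {v} b * kill {v} f₂ = 0 := by
    simpa using congrArg (kill {v}) hab
  obtain ⟨c, hc⟩ : kill {v} f₁ ∣ kill {v} b :=
    hrel.dvd_of_dvd_mul_right ⟨-kill {v} a, by linear_combination hk⟩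
  have hc' : kill {v} a = - (c * kill {v} f₂) := by
    apply mul_right_cancel₀ h0
    rw [hc] at hk
    linear_combination hk
  obtain ⟨a', ha'⟩ := X_dvd_sub_kill v a
  obtain ⟨b', hb'⟩ := X_dvd_sub_kill v b
  obtain ⟨e₁, he₁⟩ := X_dvd_sub_kill v f₁
  obtain ⟨e₂, he₂⟩ := X_dvd_sub_kill v f₂
  refine Ideal.mem_span_pair.2 ⟨a' + c * e₂, b' - c * e₁, ?_⟩
  apply mul_left_cancel₀ (X_prime (R := ℂ) (i := v)).ne_zero
  rw [← hab]
  linear_combination f₁ * (-ha' - hc' - c * he₂) + f₂ * (-hb' - hc + c * he₁)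

/-- Elimination of the variables in `T`: if modulo `J` each of them becomes, after multiplication by
a power of `w`, a polynomial in the other variables, then so does every polynomial. -/
lemma elim (T : Finset (Fin 12)) (J : Ideal R) (w : R) (hw : kill T w = w)
    (hT : ∀ i ∈ T, ∃ k : ℕ, ∃ r, kill T r = r ∧ w ^ k * X i - r ∈ J) (g : R) :
    ∃ k : ℕ, ∃ r ∈ supported ℂ ((T : Set (Fin 12))ᶜ), w ^ k * g - r ∈ J := by
  have hw' := mem_supported_of_kill hw
  induction g using MvPolynomial.induction_on with
  | C a => exact ⟨0, C a, Subalgebra.algebraMap_mem _ a, by simp⟩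
  | add p q hp hq =>
    obtain ⟨k, r, hr, h⟩ := hp
    obtain ⟨l, t, ht, h'⟩ := hq
    refine ⟨k + l, w ^ l * r + w ^ k * t,
      add_mem (mul_mem (pow_mem hw' _) hr) (mul_mem (pow_mem hw' _) ht), ?_⟩
    convert J.add_mem (J.mul_mem_left (w ^ l) h) (J.mul_mem_left (w ^ k) h') using 1
    ring
  | mul_X p i hp =>
    obtain ⟨k, r, hr, h⟩ := hp
    obtain ⟨l, t, ht, h'⟩ : ∃ k : ℕ, ∃ r ∈ supported ℂ ((T : Set (Fin 12))ᶜ),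
        w ^ k * X i - r ∈ J := by
      by_cases hi : i ∈ T
      · obtain ⟨k, r, hr, h⟩ := hT i hi
        exact ⟨k, r, mem_supported_of_kill hr, h⟩
      · exact ⟨0, X i, X_mem_supported.2 (by simpa using hi), by simp⟩
    refine ⟨k + l, r * t, mul_mem hr ht, ?_⟩
    convert J.add_mem (J.mul_mem_left (w ^ l * X i) h) (J.mul_mem_left r h') using 1
    ring

/-- The inclusion of the polynomial ring into its field of fractions. -/
abbrev ι : R →+* FractionRing R := algebraMap R (FractionRing R)

lemma eq_ι_of_mem_supported {T : Finset (Fin 12)} {φ : R →ₐ[ℂ] FractionRing R}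
    (hφ : ∀ i ∉ T, φ (X i) = ι (X i)) {r : R} (hr : r ∈ supported ℂ ((T : Set (Fin 12))ᶜ)) :
    φ r = ι r := by
  have h : supported ℂ ((T : Set (Fin 12))ᶜ) ≤
      AlgHom.equalizer φ (IsScalarTower.toAlgHom ℂ R (FractionRing R)) := by
    refine Algebra.adjoin_le ?_
    rintro _ ⟨i, hi, rfl⟩
    exact hφ i (by simpa using hi)
  exact h hr

/-- A substitution `φ` with rational functions for the variables in `T` has kernel the saturation
of `J` at `w`, as soon as it kills `J` and `J` allows the elimination of those variables. -/
lemma exists_pow_mul_mem (T : Finset (Fin 12)) (J : Ideal R) (w : R) (hw : kill T w = w)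
    (hT : ∀ i ∈ T, ∃ k : ℕ, ∃ r, kill T r = r ∧ w ^ k * X i - r ∈ J)
    (φ : R →ₐ[ℂ] FractionRing R) (hφ : ∀ i ∉ T, φ (X i) = ι (X i)) (hJ : ∀ g ∈ J, φ g = 0)
    {g : R} (hg : φ g = 0) : ∃ k : ℕ, w ^ k * g ∈ J := by
  obtain ⟨k, r, hr, h⟩ := elim T J w hw hT g
  have h0 := hJ _ h
  rw [map_sub, map_mul, hg, mul_zero, zero_sub, neg_eq_zero, eq_ι_of_mem_supported hφ hr] at h0
  have : r = 0 := by simpa using h0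
  exact ⟨k, by simpa [this] using h⟩

lemma pow_cancel {J : Ideal R} {x : R} (hx : ∀ g, x * g ∈ J → g ∈ J) (k : ℕ) {g : R}
    (h : x ^ k * g ∈ J) : g ∈ J := by
  induction k with
  | zero => simpa using h
  | succ k ih =>
    refine ih (hx _ ?_)
    rwa [← mul_assoc, ← pow_succ']

lemma ι_X_ne_zero (i : Fin 12) : ι (X i) ≠ 0 := by
  simp

/-- The first generator of the ideal of `W₀`. -/
def p : R := u1 * u3 - a2 * s1 * s2 * u2 - a4 * s3 * s4 * u4

/-- The second generator of the ideal of `W₀`. -/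
def q : R := u2 * u4 - a1 * s1 * s4 * u1 - a3 * s2 * s3 * u3

lemma I_eq : I = Ideal.span {p, q} := rfl

/-- Modulo `X v`, membership in `I` is tested after restriction to the hyperplane `X v = 0`. -/
lemma exists_sub_mem_iff (v : Fin 12) (g : R) :
    (∃ r, g - X v * r ∈ I) ↔ kill {v} g ∈ Ideal.span {kill {v} p, kill {v} q} := by
  rw [I_eq]
  constructor
  · rintro ⟨r, h⟩
    obtain ⟨a, b, hab⟩ := Ideal.mem_span_pair.1 h
    refine Ideal.mem_span_pair.2 ⟨kill {v} a, kill {v} b, ?_⟩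
    simpa using congrArg (kill {v}) hab
  · intro h
    obtain ⟨a, b, hab⟩ := Ideal.mem_span_pair.1 h
    obtain ⟨e, he⟩ := X_dvd_sub_kill v g
    obtain ⟨e₁, he₁⟩ := X_dvd_sub_kill v p
    obtain ⟨e₂, he₂⟩ := X_dvd_sub_kill v q
    refine ⟨e - a * e₁ - b * e₂, Ideal.mem_span_pair.2 ⟨a, b, ?_⟩⟩
    linear_combination hab + he₁ * a + he₂ * b - he

/-! ### The hyperplane sections `s₁ = 0` and `u₁ = 0` -/

lemma p_eq : p = X 0 * X 2 - X 9 * X 4 * X 5 * X 1 - X 11 * X 6 * X 7 * X 3 := rfl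

lemma q_eq : q = X 1 * X 3 - X 8 * X 4 * X 7 * X 0 - X 10 * X 5 * X 6 * X 2 := rfl

/-- The restriction of `p` to `s₁ = 0`. -/
def f₁ : R := X 0 * X 2 - X 11 * X 6 * X 7 * X 3

/-- The common restriction of `q` to `s₁ = 0` and to `u₁ = 0`. -/
def f₂ : R := X 1 * X 3 - X 10 * X 5 * X 6 * X 2

/-- The restriction of `p` to `u₁ = 0`, up to sign. -/
def e₁ : R := X 9 * X 4 * X 5 * X 1 + X 11 * X 6 * X 7 * X 3

lemma kill_s1_p : kill {4} p = f₁ := by simp [p_eq, f₁]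

lemma kill_s1_q : kill {4} q = f₂ := by simp [q_eq, f₂]

lemma kill_u1_p : kill {0} p = -e₁ := by simp [p_eq, e₁]; ring

lemma kill_u1_q : kill {0} q = f₂ := by simp [q_eq, f₂]

lemma irreducible_f₂ : Irreducible f₂ := by
  have h : f₂ = X 3 * X 1 + -(X 10 * X 5 * X 6 * X 2) := by simp only [f₂]; ring
  rw [h]
  refine irreducible_mul_X_add _ _ _ (X_prime (R := ℂ)).ne_zero (notMem_vars_of_kill (by simp))
    (notMem_vars_of_kill (by simp))
    (isRelPrime_X ![1, 1, 1, 0, 1, 1, 1, 1, 1, 1, 1, 1] rfl ?_)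
  simp

lemma isRelPrime_of_f₂ {g : R} (pt : Fin 12 → ℂ) (hf : eval pt f₂ = 0) (hg : eval pt g ≠ 0) :
    IsRelPrime g f₂ :=
  (irreducible_f₂.isRelPrime_iff_not_dvd.2 (not_dvd_of_eval pt hf hg)).symm

lemma ne_zero_of_eval {g : R} (pt : Fin 12 → ℂ) (hg : eval pt g ≠ 0) : g ≠ 0 := by
  rintro rfl
  simp at hg

/-- The point with all coordinates equal to `1`, except `u₁ = 2`. It lies on `f₂ = 0`, but on
neither of `f₁ = 0`, `e₁ = 0`. -/
def pt₀ : Fin 12 → ℂ := fun i => if i = 0 then 2 else 1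

lemma eval_pt₀_f₂ : eval pt₀ f₂ = 0 := by simp [f₂, pt₀]

lemma eval_pt₀_f₁ : eval pt₀ f₁ ≠ 0 := by simp [f₁, pt₀]; norm_num

lemma eval_pt₀_e₁ : eval pt₀ e₁ ≠ 0 := by simp [e₁, pt₀]

lemma s1_cancel (g : R) (h : X 4 * g ∈ I) : g ∈ I := by
  refine mem_of_X_mul_mem 4 (f₁ := p) (f₂ := q) ?_ ?_ h
  · rw [kill_s1_p]
    exact ne_zero_of_eval _ eval_pt₀_f₁
  · rw [kill_s1_p, kill_s1_q]
    exact isRelPrime_of_f₂ _ eval_pt₀_f₂ eval_pt₀_f₁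

lemma u1_cancel (g : R) (h : X 0 * g ∈ I) : g ∈ I := by
  have h1 : eval pt₀ (-e₁) ≠ 0 := by simpa using eval_pt₀_e₁
  refine mem_of_X_mul_mem 0 (f₁ := p) (f₂ := q) ?_ ?_ h
  · rw [kill_u1_p]
    exact ne_zero_of_eval _ h1
  · rw [kill_u1_p, kill_u1_q]
    exact isRelPrime_of_f₂ _ eval_pt₀_f₂ h1

lemma u1_cancel_f (g : R) (h : X 0 * g ∈ Ideal.span {f₁, f₂}) : g ∈ Ideal.span {f₁, f₂} := by
  have h1 : kill {0} f₁ = -(X 11 * X 6 * X 7 * X 3) := by simp [f₁]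
  have h2 : kill {0} f₂ = f₂ := by simp [f₂]
  have h3 : eval pt₀ (-(X 11 * X 6 * X 7 * X 3)) ≠ 0 := by simp [pt₀]
  refine mem_of_X_mul_mem 0 ?_ ?_ h
  · rw [h1]
    exact ne_zero_of_eval _ h3
  · rw [h1, h2]
    exact isRelPrime_of_f₂ _ eval_pt₀_f₂ h3

lemma a2_cancel_e (g : R) (h : X 9 * g ∈ Ideal.span {e₁, f₂}) : g ∈ Ideal.span {e₁, f₂} := by
  have h1 : kill {9} e₁ = X 11 * X 6 * X 7 * X 3 := by simp [e₁]
  have h2 : kill {9} f₂ = f₂ := by simp [f₂]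
  have h3 : eval pt₀ (X 11 * X 6 * X 7 * X 3) ≠ 0 := by simp [pt₀]
  refine mem_of_X_mul_mem 9 ?_ ?_ h
  · rw [h1]
    exact ne_zero_of_eval _ h3
  · rw [h1, h2]
    exact isRelPrime_of_f₂ _ eval_pt₀_f₂ h3

lemma a3_cancel_e (g : R) (h : X 10 * g ∈ Ideal.span {e₁, f₂}) : g ∈ Ideal.span {e₁, f₂} := by
  have h1 : kill {10} e₁ = e₁ := by simp [e₁]
  have h2 : kill {10} f₂ = X 1 * X 3 := by simp [f₂]
  refine mem_of_X_mul_mem 10 ?_ ?_ h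
  · rw [h1]
    exact ne_zero_of_eval _ eval_pt₀_e₁
  · rw [h1, h2]
    refine (IsRelPrime.mul_left (isRelPrime_X (fun i => if i = 1 then 0 else 1) (by simp) ?_)
      (isRelPrime_X (fun i => if i = 3 then 0 else 1) (by simp) ?_)).symm <;> simp [e₁]

lemma map_eq_zero_of_span_pair {K : Type*} [CommRing K] (φ : R →+* K) {f g : R} (hf : φ f = 0)
    (hg : φ g = 0) : ∀ x ∈ Ideal.span {f, g}, φ x = 0 := by
  intro x hx
  obtain ⟨a, b, rfl⟩ := Ideal.mem_span_pair.1 hx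
  simp [hf, hg]

/-- The ideal `(f₁, f₂)` is radical: it is the intersection of the prime `(u₃, u₄)` and of the
kernel of `u₃ ↦ a₄s₃s₄u₄/u₁`, `u₂ ↦ a₃a₄s₂s₃²s₄/u₁`. -/
lemma radical_f {g : R} {n : ℕ} (h : g ^ n ∈ Ideal.span {f₁, f₂}) : g ∈ Ideal.span {f₁, f₂} := by
  let φ : R →ₐ[ℂ] FractionRing R := aeval fun i =>
    if i = 2 then ι (X 11 * X 6 * X 7 * X 3) / ι (X 0) else
    if i = 1 then ι (X 10 * X 11 * X 5 * X 6 ^ 2 * X 7) / ι (X 0) else ι (X i)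
  have hne := ι_X_ne_zero 0
  have hφ1 : φ f₁ = 0 := by
    simp [φ, f₁]
    field_simp
    ring
  have hφ2 : φ f₂ = 0 := by
    simp [φ, f₂]
    field_simp
    ring
  -- `H` is the equation that, together with `f₁` and `f₂`, cuts out the second component.
  set H : R := X 0 * X 1 - X 10 * X 11 * X 5 * X 6 ^ 2 * X 7 with hH
  have hφ3 : φ H = 0 := by
    simp [φ, hH]
    field_simp
    ring
  have hg1 : φ g = 0 := by
    have := map_eq_zero_of_span_pair φ.toRingHom hφ1 hφ2 _ h
    exact eq_zero_of_pow_eq_zero (n := n) (by simpa using this)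
  have hg2 : kill {2, 3} g = 0 := by
    have := map_eq_zero_of_span_pair (kill {2, 3}).toRingHom
      (show kill {2, 3} f₁ = 0 by simp [f₁]) (show kill {2, 3} f₂ = 0 by simp [f₂]) _ h
    exact eq_zero_of_pow_eq_zero (n := n) (by simpa using this)
  obtain ⟨k, hk⟩ : ∃ k : ℕ, X 0 ^ k * g ∈ Ideal.span {f₁, H} := by
    refine exists_pow_mul_mem {1, 2} _ (X 0) (by simp) ?_ φ ?_
      (map_eq_zero_of_span_pair φ.toRingHom hφ1 hφ3) hg1
    · intro i hi
      have : i = 1 ∨ i = 2 := by simpa using hi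
      rcases this with rfl | rfl
      · refine ⟨1, X 10 * X 11 * X 5 * X 6 ^ 2 * X 7, by simp, Ideal.mem_span_pair.2 ⟨0, 1, ?_⟩⟩
        rw [hH]
        ring
      · refine ⟨1, X 11 * X 6 * X 7 * X 3, by simp, Ideal.mem_span_pair.2 ⟨1, 0, ?_⟩⟩
        rw [f₁]
        ring
    · intro i hi
      have : i ≠ 1 ∧ i ≠ 2 := by simpa using hi
      simp [φ, this.1, this.2]
  obtain ⟨a, b, hab⟩ := Ideal.mem_span_pair.1 hk
  -- Restricting to `u₃ = u₄ = 0`, where `H` does not vanish, shows `b ∈ (u₃, u₄)`.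
  have hb : kill {2, 3} b = 0 := by
    have h1 := congrArg (kill {2, 3}) hab
    have h2 : kill {2, 3} H = H := by simp [hH]
    have h3 : kill {2, 3} f₁ = 0 := by simp [f₁]
    have h4 : H ≠ 0 := ne_zero_of_eval pt₀ (by simp [hH, pt₀]; norm_num)
    simpa [hg2, h2, h3, h4] using h1
  obtain ⟨c, hc⟩ := X_dvd_sub_kill 3 b
  obtain ⟨d, hd⟩ := X_dvd_sub_kill 2 (kill {3} b)
  have hcomp : kill {2} (kill {3} b) = kill {2, 3} b := by
    have : (kill {2}).comp (kill {3}) = kill {2, 3} := by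
      ext1 i
      by_cases h2 : i = 2 <;> by_cases h3 : i = 3 <;> simp [h2, h3]
    exact DFunLike.congr_fun this b
  have hb' : b = X 3 * c + X 2 * d := by
    rw [hcomp, hb] at hd
    linear_combination hc + hd
  refine pow_cancel u1_cancel_f k ?_
  refine Ideal.mem_span_pair.2 ⟨a + c * (X 10 * X 5 * X 6) + d * X 1, c * X 0
    + d * (X 11 * X 6 * X 7), ?_⟩
  rw [← hab, hb', hH, f₁, f₂]
  ring

/-- The radical of `(e₁, f₂)` is contained in its saturation at `s₁s₂s₃s₄`: away from
`s₁s₂s₃s₄ = 0`, the ideal is the kernel of a substitution of rational functions for `u₂`, `u₃`. -/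
lemma radical_e {g : R} {n : ℕ} (h : g ^ n ∈ Ideal.span {e₁, f₂}) :
    ∃ k : ℕ, (X 4 * X 5 * X 6 * X 7) ^ k * g ∈ Ideal.span {e₁, f₂} := by
  let φ : R →ₐ[ℂ] FractionRing R := aeval fun i =>
    if i = 1 then -ι (X 11 * X 6 * X 7 * X 3) / ι (X 9 * X 4 * X 5) else
    if i = 2 then -ι (X 11 * X 7 * X 3 ^ 2) / ι (X 9 * X 10 * X 4 * X 5 ^ 2) else ι (X i)
  have h4 := ι_X_ne_zero 4
  have h5 := ι_X_ne_zero 5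
  have h9 := ι_X_ne_zero 9
  have h10 := ι_X_ne_zero 10
  have hφ1 : φ e₁ = 0 := by
    simp [φ, e₁]
    field_simp
    ring
  have hφ2 : φ f₂ = 0 := by
    simp [φ, f₂]
    field_simp
    ring
  have hg1 : φ g = 0 := by
    have := map_eq_zero_of_span_pair φ.toRingHom hφ1 hφ2 _ h
    exact eq_zero_of_pow_eq_zero (n := n) (by simpa using this)
  obtain ⟨k, hk⟩ : ∃ k : ℕ, (X 9 * X 10 * (X 4 * X 5 * X 6 * X 7)) ^ k * g
      ∈ Ideal.span {e₁, f₂} := by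
    refine exists_pow_mul_mem {1, 2} _ _ (by simp) ?_ φ ?_
      (map_eq_zero_of_span_pair φ.toRingHom hφ1 hφ2) hg1
    · intro i hi
      have : i = 1 ∨ i = 2 := by simpa using hi
      rcases this with rfl | rfl
      · refine ⟨1, - (X 10 * X 6 * X 7 * (X 11 * X 6 * X 7 * X 3)), by simp,
          Ideal.mem_span_pair.2 ⟨X 10 * X 6 * X 7, 0, ?_⟩⟩
        rw [e₁]
        ring
      · refine ⟨2, -(X 9 * X 10 * X 4 * X 6 * X 7 ^ 2 * X 3 * (X 11 * X 6 * X 7 * X 3)), by simp,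
          Ideal.mem_span_pair.2 ⟨X 9 * X 10 * X 4 * X 6 * X 7 ^ 2 * X 3,
            -(X 9 ^ 2 * X 10 * X 4 ^ 2 * X 5 * X 6 * X 7 ^ 2), ?_⟩⟩
        rw [e₁, f₂]
        ring
    · intro i hi
      have : i ≠ 1 ∧ i ≠ 2 := by simpa using hi
      simp [φ, this.1, this.2]
  refine ⟨k, pow_cancel a3_cancel_e k (pow_cancel a2_cancel_e k ?_)⟩
  convert hk using 1
  ring

/-! ### Symmetry -/

/-- Rotation of the indices `1 → 2 → 3 → 4 → 1` of `u`, `s` and `a`. -/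
def rotFun : Fin 12 → Fin 12 := ![1, 2, 3, 0, 5, 6, 7, 4, 9, 10, 11, 8]

/-- The symmetry of `W₀` that rotates the indices. -/
def rot : R →ₐ[ℂ] R := rename rotFun

lemma rot_mem {g : R} (h : g ∈ I) : rot g ∈ I := by
  rw [I_eq] at *
  obtain ⟨a, b, rfl⟩ := Ideal.mem_span_pair.1 h
  refine Ideal.mem_span_pair.2 ⟨rot b, rot a, ?_⟩
  have h1 : rot p = q := by
    simp [rot, p_eq, q_eq, rotFun]
    ring
  have h2 : rot q = p := by
    simp [rot, p_eq, q_eq, rotFun]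
    ring
  rw [map_add, map_mul, map_mul, h1, h2, add_comm]

lemma rot_four (g : R) : rot (rot (rot (rot g))) = g := by
  have : (rot.comp rot).comp (rot.comp rot) = AlgHom.id ℂ R := by
    ext1 i
    fin_cases i <;> simp [rot, rotFun]
  exact DFunLike.congr_fun this g

/-- `X v` is a nonzerodivisor on `ℂ[u,s,a]/I`, and generates a radical ideal there. -/
def Good (v : Fin 12) : Prop :=
  (∀ g, X v * g ∈ I → g ∈ I) ∧ ∀ g n, (∃ r, g ^ n - X v * r ∈ I) → ∃ r, g - X v * r ∈ I

lemma Good.rot {v : Fin 12} (h : Good v) : Good (rotFun v) := by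
  have h3 : KeyW.rot (KeyW.rot (KeyW.rot (X (rotFun v)))) = X v := by
    have := rot_four (X v)
    rwa [show KeyW.rot (X v) = X (rotFun v) by simp [KeyW.rot]] at this
  have h1 : KeyW.rot (X v) = X (rotFun v) := by simp [KeyW.rot]
  constructor
  · intro g hg
    have := rot_mem (rot_mem (rot_mem hg))
    simp only [map_mul, h3] at this
    simpa only [rot_four] using rot_mem (h.1 _ this)
  · rintro g n ⟨r, hr⟩
    have := rot_mem (rot_mem (rot_mem hr))
    simp only [map_mul, map_sub, map_pow, h3] at this
    obtain ⟨t, ht⟩ := h.2 _ _ ⟨_, this⟩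
    refine ⟨KeyW.rot t, ?_⟩
    simpa only [map_sub, map_mul, rot_four, h1] using rot_mem ht

lemma good_s1 : Good 4 := by
  refine ⟨s1_cancel, fun g n h => ?_⟩
  rw [exists_sub_mem_iff, kill_s1_p, kill_s1_q] at *
  rw [map_pow] at h
  exact radical_f h

lemma good_s2 : Good 5 := good_s1.rot

lemma good_s3 : Good 6 := good_s2.rot

lemma good_s4 : Good 7 := good_s3.rot

/-- Away from `s₁s₂s₃s₄ = 0`, the element `u₁` generates a radical ideal of `ℂ[u,s,a]/I`. -/
lemma radical_u1 {g : R} {n : ℕ} (h : ∃ r, g ^ n - X 0 * r ∈ I) :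
    ∃ k : ℕ, ∃ r, (X 4 * X 5 * X 6 * X 7) ^ k * g - X 0 * r ∈ I := by
  have hspan : Ideal.span {-e₁, f₂} = Ideal.span {e₁, f₂} := by
    rw [Ideal.span_insert, Ideal.span_insert, Ideal.span_singleton_neg]
  simp only [exists_sub_mem_iff, kill_u1_p, kill_u1_q, hspan] at *
  rw [map_pow] at h
  obtain ⟨k, hk⟩ := radical_e h
  refine ⟨k, ?_⟩
  simpa using hk

/-! ### The rational parametrisation -/

/-- The element whose inversion turns `W₀` into an open subset of `𝔸¹⁰`: once `u₁`, `s₁`, `s₄` are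
invertible, the equations can be solved for `u₃` and `a₁`. -/
def w : R := X 0 * (X 4 * X 5 * X 6 * X 7)

lemma kill_w : kill {2, 8} w = w := by simp [w]

lemma elim_I : ∀ i ∈ ({2, 8} : Finset (Fin 12)),
    ∃ k : ℕ, ∃ r, kill {2, 8} r = r ∧ w ^ k * X i - r ∈ I := by
  intro i hi
  have : i = 2 ∨ i = 8 := by simpa using hi
  rw [I_eq]
  rcases this with rfl | rfl
  · refine ⟨1, X 4 * X 5 * X 6 * X 7 * (X 9 * X 4 * X 5 * X 1 + X 11 * X 6 * X 7 * X 3),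
      by simp, Ideal.mem_span_pair.2 ⟨X 4 * X 5 * X 6 * X 7, 0, ?_⟩⟩
    rw [w, p_eq]
    ring
  · refine ⟨2, X 4 * X 5 ^ 2 * X 6 ^ 2 * X 7 * (X 0 * X 1 * X 3 -
        X 10 * X 5 * X 6 * (X 9 * X 4 * X 5 * X 1 + X 11 * X 6 * X 7 * X 3)),
      by simp, Ideal.mem_span_pair.2 ⟨-(X 4 * X 5 ^ 2 * X 6 ^ 2 * X 7) * X 10 * X 5 * X 6,
        -(X 4 * X 5 ^ 2 * X 6 ^ 2 * X 7) * X 0, ?_⟩⟩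
    rw [w, p_eq, q_eq]
    ring

lemma w_cancel (g : R) (h : w * g ∈ I) : g ∈ I := by
  refine good_s4.1 _ (good_s3.1 _ (good_s2.1 _ (good_s1.1 _ (u1_cancel _ ?_))))
  convert h using 1
  rw [w]
  ring

/-- The rational parametrisation of `W₀` by all coordinates except `u₃` and `a₁`. -/
def param : R →ₐ[ℂ] FractionRing R := aeval fun i =>
  if i = 2 then ι (X 9 * X 4 * X 5 * X 1 + X 11 * X 6 * X 7 * X 3) / ι (X 0) else
  if i = 8 then ι (X 0 * X 1 * X 3 -
        X 10 * X 5 * X 6 * (X 9 * X 4 * X 5 * X 1 + X 11 * X 6 * X 7 * X 3)) /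
      ι (X 0 ^ 2 * X 4 * X 7) else ι (X i)

lemma param_X {i : Fin 12} (hi : i ∉ ({2, 8} : Finset (Fin 12))) : param (X i) = ι (X i) := by
  have : i ≠ 2 ∧ i ≠ 8 := by simpa using hi
  simp [param, this.1, this.2]

lemma param_I : ∀ g ∈ I, param g = 0 := by
  have h0 := ι_X_ne_zero 0
  have h4 := ι_X_ne_zero 4
  have h7 := ι_X_ne_zero 7
  refine map_eq_zero_of_span_pair param.toRingHom (show param p = 0 from ?_)
    (show param q = 0 from ?_)
  · simp [param, p_eq]
    field_simp
    ring
  · simp [param, q_eq]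
    field_simp
    ring

/-- The kernel of `param` is exactly `I`, because `w` is a nonzerodivisor modulo `I`. -/
lemma param_eq_zero_iff {g : R} : param g = 0 ↔ g ∈ I := by
  refine ⟨fun h => ?_, param_I g⟩
  obtain ⟨k, hk⟩ := exists_pow_mul_mem {2, 8} I w kill_w elim_I param (fun i => param_X) param_I h
  exact pow_cancel w_cancel k hk

lemma isPrime_I : I.IsPrime := by
  have : I = RingHom.ker param := by
    ext g
    rw [RingHom.mem_ker, param_eq_zero_iff]
  rw [this]
  exact RingHom.ker_isPrime _

/-- The polynomial ring in the ten coordinates other than `u₃` and `a₁`, as a subalgebra. -/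
abbrev P : Subalgebra ℂ R := supported ℂ ((({2, 8} : Finset (Fin 12)) : Set (Fin 12))ᶜ)

lemma P_inj {r : R} (hr : r ∈ P) (h : r ∈ I) : r = 0 := by
  have := param_I r h
  rw [eq_ι_of_mem_supported (fun i => param_X) hr] at this
  simpa using this

instance : IsIntegrallyClosed P :=
  IsIntegrallyClosed.of_equiv (supportedEquivMvPolynomial (R := ℂ) _).symm.toRingEquiv

/-! ### Normality -/

/-- The class in `ℂ[u,s,a]/I` of a polynomial. -/
abbrev cl : R →+* R ⧸ I := Ideal.Quotient.mk I

lemma cl_dvd_iff {x g : R} : cl x ∣ cl g ↔ ∃ r, g - x * r ∈ I := by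
  constructor
  · rintro ⟨r, hr⟩
    obtain ⟨r, rfl⟩ := Ideal.Quotient.mk_surjective r
    exact ⟨r, by rwa [← map_mul, Ideal.Quotient.mk_eq_mk_iff_sub_mem] at hr⟩
  · rintro ⟨r, hr⟩
    exact ⟨cl r, by rwa [← map_mul, Ideal.Quotient.mk_eq_mk_iff_sub_mem]⟩

lemma cl_ne_zero {x : R} (hx : ∀ g, x * g ∈ I → g ∈ I) : cl x ≠ 0 := by
  intro h
  refine isPrime_I.ne_top ((Ideal.eq_top_iff_one _).2 (hx 1 ?_))
  rwa [mul_one, ← Ideal.Quotient.eq_zero_iff_mem]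

lemma isIntegrallyClosed_quotient [IsDomain (R ⧸ I)] : IsIntegrallyClosed (R ⧸ I) := by
  rw [isIntegrallyClosed_iff (FractionRing (R ⧸ I))]
  intro f hf
  have hinj : Function.Injective (algebraMap P (R ⧸ I)) := by
    rw [injective_iff_map_eq_zero]
    intro r hr
    exact Subtype.ext (P_inj r.2 (Ideal.Quotient.eq_zero_iff_mem.1 hr))
  have : FaithfulSMul P (R ⧸ I) := (faithfulSMul_iff_algebraMap_injective _ _).2 hinj
  let wP : P := ⟨w, mem_supported_of_kill kill_w⟩
  have hw0 : wP ≠ 0 := by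
    intro h
    refine cl_ne_zero w_cancel ?_
    rw [show w = 0 from congrArg Subtype.val h, map_zero]
  obtain ⟨k, a, ha⟩ := exists_pow_mul_eq_of_isIntegral (K := FractionRing (R ⧸ I)) wP hw0
    (by
      intro a
      obtain ⟨g, rfl⟩ := Ideal.Quotient.mk_surjective a
      obtain ⟨k, r, hr, h⟩ := elim {2, 8} I w kill_w elim_I g
      exact ⟨k, ⟨r, hr⟩, (Ideal.Quotient.mk_eq_mk_iff_sub_mem _ _).2 h⟩) hf
  set j := algebraMap (R ⧸ I) (FractionRing (R ⧸ I)) with hj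
  have hwj : algebraMap P (FractionRing (R ⧸ I)) wP =
      j (cl (X 0)) * j (cl (X 4 * X 5 * X 6 * X 7)) := by
    rw [IsScalarTower.algebraMap_apply P (R ⧸ I), ← map_mul, ← map_mul]
    rfl
  rw [hwj] at ha
  -- Remove `u₁` from the denominator at the cost of powers of `s₁s₂s₃s₄`.
  obtain ⟨m, b, hb⟩ := strip (s := cl (X 4 * X 5 * X 6 * X 7))
    (f := j (cl (X 4 * X 5 * X 6 * X 7)) ^ k * f) (cl_ne_zero u1_cancel)
    (by
      intro g n h
      obtain ⟨g, rfl⟩ := Ideal.Quotient.mk_surjective g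
      rw [← map_pow, cl_dvd_iff] at h
      obtain ⟨m, hm⟩ := radical_u1 h
      exact ⟨m, by rwa [← map_pow, ← map_mul, cl_dvd_iff]⟩) k
    ((isIntegral_algebraMap.pow k).mul hf)
    ⟨a, by rw [← hj, ← ha, mul_pow]; ring⟩
  rw [← hj] at hb
  -- Remove the `sᵢ` one by one.
  have hstrip : ∀ (v : Fin 12) (_ : Good v) (k : ℕ) (h : FractionRing (R ⧸ I)),
      IsIntegral (R ⧸ I) h → (∃ a, j (cl (X v)) ^ k * h = j a) → ∃ a, h = j a := by
    intro v hv k h hfint hk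
    obtain ⟨_, b, hb⟩ := strip (s := 1) (cl_ne_zero hv.1)
      (by
        intro g n h
        obtain ⟨g, rfl⟩ := Ideal.Quotient.mk_surjective g
        rw [← map_pow, cl_dvd_iff] at h
        exact ⟨0, by simpa [cl_dvd_iff] using hv.2 _ _ h⟩) k hfint hk
    exact ⟨b, by simpa using hb⟩
  have hs : ∀ v (k : ℕ), IsIntegral (R ⧸ I) (j (cl (X v)) ^ k) := fun v k =>
    isIntegral_algebraMap.pow k
  set M := m + k
  obtain ⟨b₁, hb₁⟩ := hstrip 4 good_s1 M
    (j (cl (X 5)) ^ M * (j (cl (X 6)) ^ M * (j (cl (X 7)) ^ M * f)))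
    ((hs _ _).mul ((hs _ _).mul ((hs _ _).mul hf)))
    ⟨b, by rw [← hb]; simp only [map_mul, M, pow_add, mul_pow]; ring⟩
  obtain ⟨b₂, hb₂⟩ := hstrip 5 good_s2 M _ ((hs _ _).mul ((hs _ _).mul hf)) ⟨b₁, hb₁⟩
  obtain ⟨b₃, hb₃⟩ := hstrip 6 good_s3 M _ ((hs _ _).mul hf) ⟨b₂, hb₂⟩
  obtain ⟨b₄, hb₄⟩ := hstrip 7 good_s4 M _ hf ⟨b₃, hb₃⟩
  exact ⟨b₄, hb₄.symm⟩

/-! ### Dimension -/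

lemma irreducible_p : Irreducible p := by
  have h : p = X 0 * X 2 + -(X 9 * X 4 * X 5 * X 1 + X 11 * X 6 * X 7 * X 3) := by
    rw [p_eq]
    ring
  rw [h]
  refine irreducible_mul_X_add _ _ _ (X_prime (R := ℂ)).ne_zero (notMem_vars_of_kill (by simp))
    (notMem_vars_of_kill (by simp))
    (isRelPrime_X (fun i => if i = 0 then 0 else 1) (by simp) ?_)
  simp

/-- The two generators `p`, `q` form a regular sequence, as `p` is prime and does not divide `q`;
each of them lowers the dimension of the ambient space. -/
lemma ringKrullDim_le : ringKrullDim (R ⧸ I) ≤ 10 := by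
  have hp : p ∈ nonZeroDivisors R := mem_nonZeroDivisors_of_ne_zero irreducible_p.ne_zero
  have : IsDomain (R ⧸ Ideal.span {p}) := by
    rw [Ideal.Quotient.isDomain_iff_prime, Ideal.span_singleton_prime irreducible_p.ne_zero]
    exact irreducible_p.prime
  have hpq : ¬ p ∣ q := not_dvd_of_eval (fun i => if i = 0 then 2 else 1)
    (by simp [p_eq]; norm_num) (by simp [q_eq])
  have hq : Ideal.Quotient.mk (Ideal.span {p}) q ∈ nonZeroDivisors (R ⧸ Ideal.span {p}) := by
    refine mem_nonZeroDivisors_of_ne_zero ?_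
    rwa [Ne, Ideal.Quotient.eq_zero_iff_mem, Ideal.mem_span_singleton]
  have h1 := ringKrullDim_quotient_succ_le_of_nonZeroDivisor hp
  have h2 := ringKrullDim_quotient_succ_le_of_nonZeroDivisor hq
  have h3 : ringKrullDim (R ⧸ I) ≤ ringKrullDim
      ((R ⧸ Ideal.span {p}) ⧸ Ideal.span {Ideal.Quotient.mk (Ideal.span {p}) q}) := by
    have hle : Ideal.span {p} ≤ I := by
      rw [I_eq]
      exact Ideal.span_mono (by simp)
    refine ringKrullDim_le_of_surjective (Ideal.Quotient.lift _ (Ideal.Quotient.factor hle) ?_) ?_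
    · intro a ha
      obtain ⟨c, rfl⟩ := Ideal.mem_span_singleton.1 ha
      rw [map_mul, Ideal.Quotient.factor_mk, Ideal.Quotient.eq_zero_iff_mem.2, zero_mul]
      rw [I_eq]
      exact Ideal.subset_span (by simp)
    · exact Ideal.Quotient.lift_surjective_of_surjective _ _ (Ideal.Quotient.factor_surjective hle)
  have h4 : ringKrullDim R = 12 := by
    simp [R, MvPolynomial.ringKrullDim_of_isNoetherianRing]
  have h5 : ringKrullDim (R ⧸ I) + 1 + 1 ≤ 12 := by
    rw [← h4]
    refine le_trans ?_ h1
    gcongr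
    refine le_trans ?_ h2
    gcongr
  generalize ringKrullDim (R ⧸ I) = x at h5
  induction x with
  | bot => exact bot_le
  | coe x =>
    cases x with
    | top => exact absurd h5 (by decide)
    | coe n =>
      have h6 : ((n + 1 + 1 : ℕ) : WithBot ℕ∞) ≤ ((12 : ℕ) : WithBot ℕ∞) := h5
      have h7 : n + 1 + 1 ≤ 12 := by exact_mod_cast h6
      have h8 : ((n : ℕ) : WithBot ℕ∞) ≤ ((10 : ℕ) : WithBot ℕ∞) := by
        exact_mod_cast (by omega : n ≤ 10)
      exact h8

/-- The hyperplane section `s₁ = 0` of `W₀` contains the affine space `s₁ = u₃ = u₄ = 0` of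
dimension nine, and `s₁` is a nonzerodivisor. -/
lemma le_ringKrullDim [IsDomain (R ⧸ I)] : 10 ≤ ringKrullDim (R ⧸ I) := by
  have h1 := ringKrullDim_quotient_succ_le_of_nonZeroDivisor
    (mem_nonZeroDivisors_of_ne_zero (cl_ne_zero s1_cancel))
  -- The variables `u₃, u₄, s₁` are sent to zero, the others bijectively to the nine coordinates.
  let ψ : R →ₐ[ℂ] MvPolynomial (Fin 9) ℂ :=
    aeval ![X 0, X 1, 0, 0, 0, X 2, X 3, X 4, X 5, X 6, X 7, X 8]
  have hψ : Function.Surjective ψ := by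
    rw [← AlgHom.range_eq_top, eq_top_iff, ← MvPolynomial.adjoin_range_X]
    refine Algebra.adjoin_le ?_
    rintro _ ⟨i, rfl⟩
    refine ⟨X (![0, 1, 5, 6, 7, 8, 9, 10, 11] i), ?_⟩
    fin_cases i <;> simp [ψ]
  have hI : ∀ g ∈ I, ψ.toRingHom g = 0 :=
    map_eq_zero_of_span_pair ψ.toRingHom (show ψ p = 0 by simp [ψ, p_eq])
      (show ψ q = 0 by simp [ψ, q_eq])
  have h2 : ringKrullDim (MvPolynomial (Fin 9) ℂ) ≤
      ringKrullDim ((R ⧸ I) ⧸ Ideal.span {cl (X 4)}) := by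
    refine ringKrullDim_le_of_surjective
      (Ideal.Quotient.lift _ (Ideal.Quotient.lift I ψ.toRingHom hI) ?_) ?_
    · intro a ha
      obtain ⟨c, rfl⟩ := Ideal.mem_span_singleton.1 ha
      rw [map_mul, Ideal.Quotient.lift_mk]
      simp [ψ]
    · exact Ideal.Quotient.lift_surjective_of_surjective _ _
        (Ideal.Quotient.lift_surjective_of_surjective _ _ hψ)
  have h3 : ringKrullDim (MvPolynomial (Fin 9) ℂ) = 9 := by
    simp [MvPolynomial.ringKrullDim_of_isNoetherianRing]
  calc (10 : WithBot ℕ∞) = 9 + 1 := by norm_num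
    _ ≤ _ := by rw [← h3]; gcongr
    _ ≤ _ := h1

end KeyW

open KeyW in
/-- The quotient ring `W₀ = ℂ[u,s,a]/I` is a normal integral domain
(an integrally closed domain) of Krull dimension 10. -/
theorem W0_normal_domain_dim_ten :
    IsDomain (R ⧸ I) ∧ IsIntegrallyClosed (R ⧸ I) ∧ ringKrullDim (R ⧸ I) = 10 := by
  have hdom : IsDomain (R ⧸ I) := (Ideal.Quotient.isDomain_iff_prime I).2 isPrime_I
  refine ⟨hdom, isIntegrallyClosed_quotient, le_antisymm ringKrullDim_le le_ringKrullDim⟩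
end
end
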